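/- Let v : ℝᵈ → ℝ be ℤᵈ-periodic semiconcave with linear modulus, and let O := {x : T⁺∘T⁻[v](x) = v(x)}. Then v is differentiable at every point of O, T⁺∘T⁻[v] is differentiable at every point of O with the same derivative as v, and there exists K > 0 such that ‖dv(x₁) − dv(x₂)‖ ≤ K‖x₁ − x₂‖ for all x₁, x₂ ∈ O. -/

import Mathlib

/-!
Write `w = T⁺ (T⁻ v)`. Always `w ≤ v`, with equality on the contact set.

* `v` is semiconcave, so subtracting a multiple of `∑ zᵢ²` gives a concave function; Hahn-Banach
  provides at every `x` a linear form `p` with `v (x + h) ≤ v x + p h + A ‖h‖²`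
  (`Semiconcave.exists_supergradient`).
* Coercivity and periodicity confine near-maximizers `y` of `T⁻v (y) - S (x, y)` to a fixed ball
  around `x`, and modulo diagonal translations the pairs `(x, y)` stay in a compact set. On it the
  local semiconcavity of `S` is uniform, whence the midpoint semiconvexity
  `w (x + h) + w (x - h) - 2 w x ≥ - B ‖h‖²` (`Tplus_Tminus_midpoint`).

At a contact point `x` the supergradient bound at `-h`, the inequality `w ≤ v` and midpoint
semiconvexity give `w (x + h) ≥ v x + p h - (A + B) ‖h‖²`. Hence `v` and `w` both lie within
`(A + B) ‖h‖²` of the same affine function, so both are differentiable at `x` with derivative `p`.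
Comparing these two-sided bounds at two contact points at distance `δ`, along increments of norm
`δ`, yields the Lipschitz estimate (`norm_sub_le_of_two_sided`).
-/

open Filter Topology

/-- The discrete backward Lax-Oleinik operator. -/
noncomputable def Tminus {d : ℕ} (S : (Fin d → ℝ) → (Fin d → ℝ) → ℝ)
    (u : (Fin d → ℝ) → ℝ) : (Fin d → ℝ) → ℝ :=
  fun y => ⨅ x, (u x + S x y)

/-- The discrete forward Lax-Oleinik operator. -/
noncomputable def Tplus {d : ℕ} (S : (Fin d → ℝ) → (Fin d → ℝ) → ℝ)
    (u : (Fin d → ℝ) → ℝ) : (Fin d → ℝ) → ℝ :=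
  fun x => ⨆ y, (u y - S x y)

/-- ℤᵈ-periodicity. -/
def ZPeriodic {d : ℕ} (u : (Fin d → ℝ) → ℝ) : Prop :=
  ∀ (m : Fin d → ℤ) (x : Fin d → ℝ), u (x + fun i => (m i : ℝ)) = u x

/-- Coercivity: S(x,y) → +∞ as ‖x−y‖ → ∞. -/
def Coercive {d : ℕ} (S : (Fin d → ℝ) → (Fin d → ℝ) → ℝ) : Prop :=
  ∀ M : ℝ, ∃ R : ℝ, ∀ x y : Fin d → ℝ, R ≤ ‖x - y‖ → M ≤ S x y

/-- Diagonal periodicity: S(x+m, y+m) = S(x,y) for m ∈ ℤᵈ. -/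
def DiagPeriodic {d : ℕ} (S : (Fin d → ℝ) → (Fin d → ℝ) → ℝ) : Prop :=
  ∀ (m : Fin d → ℤ) (x y : Fin d → ℝ),
    S (x + fun i => (m i : ℝ)) (y + fun i => (m i : ℝ)) = S x y

/-- Semiconcavity with a linear modulus. -/
def Semiconcave {d : ℕ} (v : (Fin d → ℝ) → ℝ) : Prop :=
  ∃ C : ℝ, 0 ≤ C ∧ ∀ x y : Fin d → ℝ, ∀ θ : ℝ, θ ∈ Set.Icc (0:ℝ) 1 →
    θ * v x + (1 - θ) * v y - v (θ • x + (1 - θ) • y) ≤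
      C / 2 * θ * (1 - θ) * ‖x - y‖ ^ 2

/-- Local semiconcavity (with linear modulus) on a normed space. -/
def LocallySemiconcave {E : Type*} [NormedAddCommGroup E] [NormedSpace ℝ E]
    (f : E → ℝ) : Prop :=
  ∀ x : E, ∃ U ∈ 𝓝 x, Convex ℝ U ∧ ∃ C : ℝ, 0 ≤ C ∧
    ∀ y ∈ U, ∀ z ∈ U, ∀ θ : ℝ, θ ∈ Set.Icc (0:ℝ) 1 →
      θ * f y + (1 - θ) * f z - f (θ • y + (1 - θ) • z) ≤
        C / 2 * θ * (1 - θ) * ‖y - z‖ ^ 2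

/-- The ferromagnetic property: S is C¹ and the partial-derivative maps
`y ↦ ∂₁S(x,y)` and `x ↦ ∂₂S(x,y)` are homeomorphisms. -/
def Ferromagnetic {d : ℕ} (S : (Fin d → ℝ) → (Fin d → ℝ) → ℝ) : Prop :=
  ContDiff ℝ 1 (fun p : (Fin d → ℝ) × (Fin d → ℝ) => S p.1 p.2) ∧
  (∀ x : Fin d → ℝ, ∃ h : (Fin d → ℝ) ≃ₜ ((Fin d → ℝ) →L[ℝ] ℝ),
      ∀ y, h y = fderiv ℝ (fun t => S t y) x) ∧
  (∀ y : Fin d → ℝ, ∃ h : (Fin d → ℝ) ≃ₜ ((Fin d → ℝ) →L[ℝ] ℝ),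
      ∀ x, h x = fderiv ℝ (fun t => S x t) y)

/-! ### Reduction to compact sets by periodicity -/

/-- Every point of `ℝᵈ` is an integer translate of a point of the unit cube. -/
lemma exists_cube_add_int {d : ℕ} (x : Fin d → ℝ) :
    ∃ x' ∈ Set.Icc (0 : Fin d → ℝ) 1, ∃ m : Fin d → ℤ, x = x' + fun i => (m i : ℝ) :=
  ⟨fun i => Int.fract (x i),
    ⟨fun i => Int.fract_nonneg (x i), fun i => (Int.fract_lt_one (x i)).le⟩,
    fun i => ⌊x i⌋, funext fun i => (Int.fract_add_floor (x i)).symm⟩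

/-- Compact set of pairs containing a diagonal translate of every pair at distance at most `R`:
a point of the unit cube has sup norm at most `1`, hence the radius `R + 1`. -/
def cubePairs (d : ℕ) (R : ℝ) : Set ((Fin d → ℝ) × (Fin d → ℝ)) :=
  Set.Icc 0 1 ×ˢ Metric.closedBall 0 (R + 1)

lemma isCompact_cubePairs (d : ℕ) (R : ℝ) : IsCompact (cubePairs d R) :=
  isCompact_Icc.prod (isCompact_closedBall _ _)

lemma exists_cubePairs_add_int {d : ℕ} {R : ℝ} (x y : Fin d → ℝ) (hxy : ‖x - y‖ ≤ R) :
    ∃ x' y' : Fin d → ℝ, (x', y') ∈ cubePairs d R ∧ ∃ m : Fin d → ℤ,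
      x = x' + (fun i => (m i : ℝ)) ∧ y = y' + fun i => (m i : ℝ) := by
  obtain ⟨x', hx', m, rfl⟩ := exists_cube_add_int x
  refine ⟨x', y - fun i => (m i : ℝ), ⟨hx', ?_⟩, m, rfl, by simp⟩
  have h1 : ‖x'‖ ≤ 1 := by
    rw [pi_norm_le_iff_of_nonneg zero_le_one]
    intro i
    rw [Real.norm_eq_abs, abs_le]
    have h0 := hx'.1 i
    have h2 := hx'.2 i
    simp only [Pi.zero_apply, Pi.one_apply] at h0 h2
    constructor <;> linarith
  rw [mem_closedBall_zero_iff]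
  calc ‖y - fun i => (m i : ℝ)‖
      = ‖x' - (x' + (fun i => (m i : ℝ)) - y)‖ := by congr 1; abel
    _ ≤ ‖x'‖ + ‖x' + (fun i => (m i : ℝ)) - y‖ := norm_sub_le _ _
    _ ≤ R + 1 := by linarith

lemma DiagPeriodic.exists_abs_le {d : ℕ} {S : (Fin d → ℝ) → (Fin d → ℝ) → ℝ}
    (hdp : DiagPeriodic S) (hS : Continuous fun p : (Fin d → ℝ) × (Fin d → ℝ) => S p.1 p.2)
    (R : ℝ) : ∃ M : ℝ, ∀ x y, ‖x - y‖ ≤ R → |S x y| ≤ M := by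
  obtain ⟨M, hM⟩ := (isCompact_cubePairs d R).exists_bound_of_continuousOn hS.continuousOn
  refine ⟨M, fun x y hxy => ?_⟩
  obtain ⟨x', y', hmem, m, rfl, rfl⟩ := exists_cubePairs_add_int x y hxy
  rw [hdp m x' y']
  exact hM _ hmem

lemma ZPeriodic.exists_abs_le {d : ℕ} {v : (Fin d → ℝ) → ℝ} (hvp : ZPeriodic v)
    (hv : Continuous v) : ∃ M : ℝ, ∀ x, |v x| ≤ M := by
  obtain ⟨M, hM⟩ := (isCompact_Icc (a := (0 : Fin d → ℝ)) (b := 1)).exists_bound_of_continuousOn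
    hv.continuousOn
  refine ⟨M, fun x => ?_⟩
  obtain ⟨x', hx', m, rfl⟩ := exists_cube_add_int x
  rw [hvp m x']
  exact hM _ hx'

/-! ### Supergradients of semiconcave functions -/

/-- A real-valued continuous concave function has a supergradient at every point: the point
`(x, g x)` is separated from the open convex strict hypograph of `g`. -/
lemma ConcaveOn.exists_supergradient {E : Type*} [NormedAddCommGroup E] [NormedSpace ℝ E]
    {g : E → ℝ} (hg : ConcaveOn ℝ Set.univ g) (hc : Continuous g) (x : E) :
    ∃ p : E →L[ℝ] ℝ, ∀ h, g (x + h) ≤ g x + p h := by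
  have hopen : IsOpen {q : E × ℝ | q.1 ∈ Set.univ ∧ q.2 < g q.1} := by
    simp only [Set.mem_univ, true_and]
    exact isOpen_lt continuous_snd (hc.comp continuous_fst)
  obtain ⟨f, hf⟩ := geometric_hahn_banach_open_point (x := (x, g x))
    hg.convex_strict_hypograph hopen (by simp)
  have hsplit : ∀ z t, f (z, t) = f (z, 0) + t * f (0, 1) := by
    intro z t
    rw [← smul_eq_mul, ← map_smul, ← map_add]
    simp
  have hpos : 0 < f (0, 1) := by
    have h := hf (x, g x - 1) ⟨trivial, by simp⟩
    rw [hsplit x (g x - 1), hsplit x (g x)] at h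
    linarith
  refine ⟨-(f (0, 1))⁻¹ • f.comp (ContinuousLinearMap.inl ℝ E ℝ), fun h => ?_⟩
  refine le_of_forall_lt fun t ht => ?_
  have h1 := hf (x + h, t) ⟨trivial, ht⟩
  rw [hsplit (x + h) t, hsplit x (g x)] at h1
  have h2 : f (x + h, 0) = f (x, 0) + f (h, 0) := by
    rw [← map_add]; simp
  have h3 : (t - g x) * f (0, 1) < - f (h, 0) := by linarith
  have h4 := (lt_div_iff₀ hpos).2 h3
  simp only [smul_apply, ContinuousLinearMap.comp_apply,
    ContinuousLinearMap.inl_apply, smul_eq_mul]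
  have h5 : - f (h, 0) / f (0, 1) = -(f (0, 1))⁻¹ * f (h, 0) := by
    rw [div_eq_inv_mul]; ring
  linarith

lemma norm_sq_le_sum_sq {d : ℕ} (z : Fin d → ℝ) : ‖z‖ ^ 2 ≤ ∑ i, z i ^ 2 := by
  have h0 : 0 ≤ ∑ i, z i ^ 2 := Finset.sum_nonneg fun i _ => sq_nonneg _
  have h : ‖z‖ ≤ √(∑ i, z i ^ 2) := by
    rw [pi_norm_le_iff_of_nonneg (Real.sqrt_nonneg _)]
    intro i
    apply Real.le_sqrt_of_sq_le
    rw [Real.norm_eq_abs, sq_abs]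
    exact Finset.single_le_sum (f := fun i => z i ^ 2) (fun i _ => sq_nonneg _)
      (Finset.mem_univ i)
  calc ‖z‖ ^ 2 ≤ √(∑ i, z i ^ 2) ^ 2 := by gcongr
    _ = _ := Real.sq_sqrt h0

lemma sum_sq_le_norm_sq {d : ℕ} (z : Fin d → ℝ) : ∑ i, z i ^ 2 ≤ d * ‖z‖ ^ 2 := by
  calc ∑ i, z i ^ 2 ≤ ∑ _i : Fin d, ‖z‖ ^ 2 := by
        refine Finset.sum_le_sum fun i _ => ?_
        rw [← sq_abs, ← Real.norm_eq_abs]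
        gcongr
        exact norm_le_pi_norm z i
    _ = d * ‖z‖ ^ 2 := by simp

/-- The Euclidean square dominates the square of the sup norm, so it can compensate the defect of
concavity even though that defect is measured in the sup norm. -/
lemma concaveOn_sub_sum_sq {d : ℕ} {v : (Fin d → ℝ) → ℝ} {C : ℝ} (hC : 0 ≤ C)
    (hv : ∀ x y : Fin d → ℝ, ∀ θ : ℝ, θ ∈ Set.Icc (0:ℝ) 1 →
      θ * v x + (1 - θ) * v y - v (θ • x + (1 - θ) • y) ≤
        C / 2 * θ * (1 - θ) * ‖x - y‖ ^ 2) :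
    ConcaveOn ℝ Set.univ fun z => v z - C / 2 * ∑ i, z i ^ 2 := by
  refine ⟨convex_univ, fun x _ y _ a b ha hb hab => ?_⟩
  obtain rfl : b = 1 - a := by linarith
  have h1 := hv x y a ⟨ha, by linarith⟩
  have h2 := norm_sq_le_sum_sq (x - y)
  have h3 : ∑ i, (a • x + (1 - a) • y) i ^ 2
      = a * ∑ i, x i ^ 2 + (1 - a) * ∑ i, y i ^ 2 - a * (1 - a) * ∑ i, (x - y) i ^ 2 := by
    simp only [Finset.mul_sum, ← Finset.sum_add_distrib, ← Finset.sum_sub_distrib]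
    refine Finset.sum_congr rfl fun i _ => ?_
    simp only [Pi.add_apply, Pi.smul_apply, Pi.sub_apply, smul_eq_mul]
    ring
  have h4 : C / 2 * a * (1 - a) * ‖x - y‖ ^ 2 ≤ C / 2 * a * (1 - a) * ∑ i, (x - y) i ^ 2 := by
    gcongr
  simp only [smul_eq_mul, h3]
  linarith

lemma Semiconcave.continuous {d : ℕ} {v : (Fin d → ℝ) → ℝ} (hv : Semiconcave v) :
    Continuous v := by
  obtain ⟨C, hC, hv⟩ := hv
  have h1 := (concaveOn_sub_sum_sq hC hv).locallyLipschitz.continuous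
  have h2 : Continuous fun z : Fin d → ℝ => C / 2 * ∑ i, z i ^ 2 := by fun_prop
  exact (h1.add h2).congr fun z => sub_add_cancel _ _

lemma Semiconcave.exists_supergradient {d : ℕ} {v : (Fin d → ℝ) → ℝ} (hv : Semiconcave v) :
    ∃ A : ℝ, 0 ≤ A ∧ ∀ x, ∃ p : (Fin d → ℝ) →L[ℝ] ℝ, ∀ h,
      v (x + h) ≤ v x + p h + A * ‖h‖ ^ 2 := by
  obtain ⟨C, hC, hv⟩ := hv
  have hg := concaveOn_sub_sum_sq hC hv
  refine ⟨C / 2 * d, by positivity, fun x => ?_⟩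
  obtain ⟨p, hp⟩ := hg.exists_supergradient hg.locallyLipschitz.continuous x
  -- The extra term is the differential of `C / 2 * ∑ zᵢ²` at `x`.
  refine ⟨p + C • ∑ i, x i • ContinuousLinearMap.proj (R := ℝ) (φ := fun _ : Fin d => ℝ) i,
    fun h => ?_⟩
  have h1 := hp h
  have h2 : ∑ i, (x + h) i ^ 2 = ∑ i, x i ^ 2 + 2 * ∑ i, x i * h i + ∑ i, h i ^ 2 := by
    simp only [Finset.mul_sum, ← Finset.sum_add_distrib]
    refine Finset.sum_congr rfl fun i _ => ?_
    simp only [Pi.add_apply]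
    ring
  have h3 : C / 2 * ∑ i, h i ^ 2 ≤ C / 2 * (d * ‖h‖ ^ 2) := by
    gcongr
    exact sum_sq_le_norm_sq h
  simp only [h2] at h1
  simp only [add_apply, smul_apply,
    sum_apply, ContinuousLinearMap.proj_apply, smul_eq_mul]
  linarith

/-! ### Midpoint semiconvexity of `T⁺ (T⁻ v)` -/

/-- Local semiconcavity becomes uniform on compact sets, in its midpoint form. -/
lemma LocallySemiconcave.midpoint_on_compact {E : Type*} [NormedAddCommGroup E] [NormedSpace ℝ E]
    {f : E → ℝ} (hf : LocallySemiconcave f) {K : Set E} (hK : IsCompact K) :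
    ∃ C : ℝ, 0 ≤ C ∧ ∃ r : ℝ, 0 < r ∧ ∀ p ∈ K, ∀ h, ‖h‖ < r →
      f (p + h) + f (p - h) - 2 * f p ≤ C * ‖h‖ ^ 2 := by
  refine hK.induction_on ?_ ?_ ?_ ?_
  · exact ⟨0, le_rfl, 1, one_pos, by simp⟩
  · rintro s t hst ⟨C, hC, r, hr, h⟩
    exact ⟨C, hC, r, hr, fun p hp => h p (hst hp)⟩
  · rintro s t ⟨C, hC, r, hr, h⟩ ⟨C', hC', r', hr', h'⟩
    refine ⟨max C C', le_max_of_le_left hC, min r r', lt_min hr hr', ?_⟩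
    rintro p (hp | hp) k hk
    · refine (h p hp k (hk.trans_le (min_le_left _ _))).trans ?_
      gcongr
      exact le_max_left _ _
    · refine (h' p hp k (hk.trans_le (min_le_right _ _))).trans ?_
      gcongr
      exact le_max_right _ _
  · intro x _
    obtain ⟨U, hU, -, C, hC, h⟩ := hf x
    obtain ⟨r, hr, hrU⟩ := Metric.mem_nhds_iff.1 hU
    refine ⟨Metric.ball x (r / 2), mem_nhdsWithin_of_mem_nhds (Metric.ball_mem_nhds _ (by linarith)),
      C, hC, r / 2, by linarith, fun p hp k hk => ?_⟩
    rw [mem_ball_iff_norm] at hp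
    have hplus : p + k ∈ U := hrU <| by
      rw [mem_ball_iff_norm, add_sub_right_comm]
      exact (norm_add_le _ _).trans_lt (by linarith)
    have hminus : p - k ∈ U := hrU <| by
      rw [mem_ball_iff_norm, sub_right_comm]
      exact (norm_sub_le _ _).trans_lt (by linarith)
    have h1 := h _ hplus _ hminus (1 / 2) (by norm_num)
    have h2 : (1 / 2 : ℝ) • (p + k) + (1 - 1 / 2 : ℝ) • (p - k) = p := by module
    have h3 : p + k - (p - k) = (2 : ℝ) • k := by module
    rw [h2, h3, norm_smul, Real.norm_ofNat] at h1
    linarith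

/-- Elementary properties of `T⁻ v` and `T⁺ (T⁻ v)` for bounded `v`: the infimum and supremum
defining them are finite, both functions are bounded, and `T⁺ (T⁻ v) ≤ v`. -/
lemma Tplus_Tminus_bounds {d : ℕ} {S : (Fin d → ℝ) → (Fin d → ℝ) → ℝ}
    (hS : Continuous fun p : (Fin d → ℝ) × (Fin d → ℝ) => S p.1 p.2)
    (hco : Coercive S) (hdp : DiagPeriodic S)
    {v : (Fin d → ℝ) → ℝ} {M : ℝ} (hM : ∀ x, |v x| ≤ M) :
    ∃ N : ℝ, (∀ y, |Tminus S v y| ≤ N) ∧ (∀ x, |Tplus S (Tminus S v) x| ≤ N) ∧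
      (∀ x, Tplus S (Tminus S v) x ≤ v x) ∧
      ∀ x y, Tminus S v y - S x y ≤ Tplus S (Tminus S v) x := by
  obtain ⟨R, hR⟩ := hco 0
  obtain ⟨L, hL⟩ := hdp.exists_abs_le hS (max R 0)
  have hdiag : ∀ x, |S x x| ≤ L := fun x => hL x x (by simp)
  have hL0 : 0 ≤ L := (abs_nonneg _).trans (hdiag 0)
  have hSlow : ∀ x y, -L ≤ S x y := by
    intro x y
    rcases le_total R ‖x - y‖ with h | h
    · linarith [hR x y h]
    · exact (abs_le.1 (hL x y (h.trans (le_max_left _ _)))).1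
  have hbdd : ∀ y, BddBelow (Set.range fun x => v x + S x y) := by
    rintro y
    refine ⟨-M - L, ?_⟩
    rintro _ ⟨x, rfl⟩
    have := (abs_le.1 (hM x)).1
    have := hSlow x y
    dsimp only
    linarith
  have hu : ∀ x y, Tminus S v y ≤ v x + S x y := fun x y => ciInf_le (hbdd y) x
  have hbdd' : ∀ x, BddAbove (Set.range fun y => Tminus S v y - S x y) := by
    intro x
    refine ⟨v x, ?_⟩
    rintro _ ⟨y, rfl⟩
    dsimp only
    linarith [hu x y]
  have hw : ∀ x y, Tminus S v y - S x y ≤ Tplus S (Tminus S v) x :=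
    fun x y => le_ciSup (hbdd' x) y
  have hwv : ∀ x, Tplus S (Tminus S v) x ≤ v x :=
    fun x => ciSup_le fun y => by linarith [hu x y]
  have hulow : ∀ y, -M - L ≤ Tminus S v y := fun y => le_ciInf fun x => by
    linarith [(abs_le.1 (hM x)).1, hSlow x y]
  refine ⟨M + 2 * L, fun y => abs_le.2 ⟨?_, ?_⟩, fun x => abs_le.2 ⟨?_, ?_⟩, hwv, hw⟩
  · linarith [hulow y]
  · linarith [hu y y, (abs_le.1 (hM y)).2, (abs_le.1 (hdiag y)).2]
  · linarith [hw x x, hulow x, (abs_le.1 (hdiag x)).2]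
  · linarith [hwv x, (abs_le.1 (hM x)).2]

/-- `T⁺ (T⁻ v)` is semiconvex in the midpoint sense, globally and with a uniform constant.
Small increments are handled by the uniform semiconcavity of `S`, large ones by boundedness. -/
lemma Tplus_Tminus_midpoint {d : ℕ} {S : (Fin d → ℝ) → (Fin d → ℝ) → ℝ}
    (hS : Continuous fun p : (Fin d → ℝ) × (Fin d → ℝ) => S p.1 p.2)
    (hco : Coercive S) (hdp : DiagPeriodic S)
    (hlsc : LocallySemiconcave fun p : (Fin d → ℝ) × (Fin d → ℝ) => S p.1 p.2)
    {v : (Fin d → ℝ) → ℝ} {M : ℝ} (hM : ∀ x, |v x| ≤ M) :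
    ∃ B : ℝ, 0 ≤ B ∧ ∀ x h, 2 * Tplus S (Tminus S v) x - B * ‖h‖ ^ 2 ≤
      Tplus S (Tminus S v) (x + h) + Tplus S (Tminus S v) (x - h) := by
  obtain ⟨N, huN, hwN, -, hle⟩ := Tplus_Tminus_bounds hS hco hdp hM
  have hN0 : 0 ≤ N := (abs_nonneg _).trans (huN 0)
  -- A maximizer up to an error less than `1` satisfies `S x y < 2 * N + 1`, hence `‖x - y‖ ≤ R`.
  obtain ⟨R, hR⟩ := hco (2 * N + 1)
  obtain ⟨C, hC, r, hr, hmid⟩ := hlsc.midpoint_on_compact (isCompact_cubePairs d R)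
  have hmidS : ∀ x y h : Fin d → ℝ, ‖x - y‖ ≤ R → ‖h‖ < r →
      S (x + h) y + S (x - h) y - 2 * S x y ≤ C * ‖h‖ ^ 2 := by
    intro x y h hxy hh
    obtain ⟨x', y', hmem, m, rfl, rfl⟩ := exists_cubePairs_add_int x y hxy
    have hnorm : ‖((h, 0) : (Fin d → ℝ) × (Fin d → ℝ))‖ = ‖h‖ := by simp [Prod.norm_def]
    have h1 := hmid _ hmem (h, 0) (by rwa [hnorm])
    rw [hnorm] at h1
    simp only [Prod.mk_add_mk, Prod.mk_sub_mk, add_zero, sub_zero] at h1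
    rw [add_right_comm x', add_sub_right_comm x', hdp, hdp, hdp]
    exact h1
  refine ⟨C + 4 * N / r ^ 2, by positivity, fun x h => ?_⟩
  rcases lt_or_ge ‖h‖ r with hh | hh
  · have hBC : C * ‖h‖ ^ 2 ≤ (C + 4 * N / r ^ 2) * ‖h‖ ^ 2 := by
      gcongr
      exact le_add_of_nonneg_right (by positivity)
    refine le_of_forall_pos_le_add fun ε hε => ?_
    obtain ⟨y, hy⟩ : ∃ y, Tplus S (Tminus S v) x - min (ε / 2) (1 / 2) < Tminus S v y - S x y :=
      exists_lt_of_lt_ciSup (sub_lt_self _ (lt_min (by positivity) (by norm_num)))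
    have hy1 := min_le_left (ε / 2) (1 / 2)
    have hy2 := min_le_right (ε / 2) (1 / 2)
    have hxy : ‖x - y‖ ≤ R := by
      by_contra! hlt
      linarith [hR x y hlt.le, (abs_le.1 (hwN x)).1, (abs_le.1 (huN y)).2]
    linarith [hmidS x y h hxy hh, hle (x + h) y, hle (x - h) y]
  · have h1 : 4 * N ≤ 4 * N / r ^ 2 * ‖h‖ ^ 2 := by
      rw [div_mul_eq_mul_div, le_div_iff₀ (by positivity)]
      gcongr
    have h2 : 0 ≤ C * ‖h‖ ^ 2 := by positivity
    linarith [(abs_le.1 (hwN x)).2, (abs_le.1 (hwN (x + h))).1, (abs_le.1 (hwN (x - h))).1]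

/-! ### Two-sided quadratic bounds -/

/-- Two linear forms whose quadratic two-sided bounds on `v` hold at `x₁` and `x₂` differ by
`O(‖x₁ - x₂‖)`: evaluate at `x₂ + h` with `‖h‖ = ‖x₁ - x₂‖`. -/
lemma norm_sub_le_of_two_sided {E : Type*} [NormedAddCommGroup E] [NormedSpace ℝ E]
    {v : E → ℝ} {K : ℝ} (hK : 0 ≤ K) {x₁ x₂ : E} {p₁ p₂ : E →L[ℝ] ℝ}
    (hne : x₁ ≠ x₂)
    (h₁ : ∀ h, |v (x₁ + h) - v x₁ - p₁ h| ≤ K * ‖h‖ ^ 2)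
    (h₂ : ∀ h, |v (x₂ + h) - v x₂ - p₂ h| ≤ K * ‖h‖ ^ 2) :
    ‖p₁ - p₂‖ ≤ 6 * K * ‖x₁ - x₂‖ := by
  have hδ : 0 < ‖x₁ - x₂‖ := norm_pos_iff.2 (sub_ne_zero.2 hne)
  set δ := ‖x₁ - x₂‖ with hδ_def
  have key : ∀ h : E, ‖h‖ = δ → (p₁ - p₂) h ≤ 6 * K * δ ^ 2 := by
    intro h hh
    have e1 := (abs_le.1 (h₁ (x₂ - x₁ + h))).1
    have e2 := (abs_le.1 (h₂ h)).2
    have e3 := (abs_le.1 (h₁ (x₂ - x₁))).2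
    have n1 : ‖x₂ - x₁‖ = δ := norm_sub_rev _ _
    have n2 : ‖x₂ - x₁ + h‖ ^ 2 ≤ (2 * δ) ^ 2 := by
      gcongr
      linarith [norm_add_le (x₂ - x₁) h]
    have n3 : K * ‖x₂ - x₁ + h‖ ^ 2 ≤ K * (2 * δ) ^ 2 := by gcongr
    rw [← add_assoc, add_sub_cancel, map_add] at e1
    rw [add_sub_cancel, n1] at e3
    rw [hh] at e2
    rw [sub_apply]
    linarith
  refine ContinuousLinearMap.opNorm_le_of_unit_norm (by positivity) fun e he => ?_
  have hnorm : ‖δ • e‖ = δ := by rw [norm_smul, he, mul_one, Real.norm_of_nonneg hδ.le]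
  have k1 := key (δ • e) hnorm
  have k2 := key (-(δ • e)) (by rw [norm_neg, hnorm])
  rw [map_neg, map_smul, smul_eq_mul] at k2
  rw [map_smul, smul_eq_mul] at k1
  rw [Real.norm_eq_abs]
  refine le_of_mul_le_mul_left ?_ hδ
  rw [← abs_of_pos hδ, ← abs_mul, abs_of_pos hδ]
  exact abs_le.2 ⟨by linarith, by linarith⟩

lemma hasFDerivAt_of_two_sided {E : Type*} [NormedAddCommGroup E] [NormedSpace ℝ E]
    {v : E → ℝ} {K : ℝ} {x : E} {p : E →L[ℝ] ℝ}
    (h : ∀ h, |v (x + h) - v x - p h| ≤ K * ‖h‖ ^ 2) : HasFDerivAt v p x := by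
  rw [hasFDerivAt_iff_isLittleO_nhds_zero]
  refine Asymptotics.IsBigO.trans_isLittleO (g := fun k : E => ‖k‖ ^ 2) ?_
    (Asymptotics.isLittleO_norm_pow_id one_lt_two)
  refine Asymptotics.IsBigO.of_bound K (Eventually.of_forall fun k => ?_)
  simpa using h k

/-- C^{1,1} regularity of a semiconcave v on the contact set
O = {x : T⁺∘T⁻[v](x) = v(x)}. -/
theorem C11_on_contact_set {d : ℕ} (S : (Fin d → ℝ) → (Fin d → ℝ) → ℝ)
    (hS : Continuous fun p : (Fin d → ℝ) × (Fin d → ℝ) => S p.1 p.2)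
    (hco : Coercive S) (hdp : DiagPeriodic S)
    (hlsc : LocallySemiconcave fun p : (Fin d → ℝ) × (Fin d → ℝ) => S p.1 p.2)
    (v : (Fin d → ℝ) → ℝ) (hvp : ZPeriodic v) (hv : Semiconcave v) :
    (∀ x ∈ {x : Fin d → ℝ | Tplus S (Tminus S v) x = v x},
        DifferentiableAt ℝ v x ∧ DifferentiableAt ℝ (Tplus S (Tminus S v)) x ∧
        fderiv ℝ (Tplus S (Tminus S v)) x = fderiv ℝ v x) ∧
    ∃ K : ℝ, 0 < K ∧
      ∀ x₁ ∈ {x : Fin d → ℝ | Tplus S (Tminus S v) x = v x},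
      ∀ x₂ ∈ {x : Fin d → ℝ | Tplus S (Tminus S v) x = v x},
        ‖fderiv ℝ v x₁ - fderiv ℝ v x₂‖ ≤ K * ‖x₁ - x₂‖ := by
  obtain ⟨M, hM⟩ := hvp.exists_abs_le hv.continuous
  obtain ⟨A, hA, hsup⟩ := hv.exists_supergradient
  obtain ⟨B, hB, hmid⟩ := Tplus_Tminus_midpoint hS hco hdp hlsc hM
  obtain ⟨-, -, -, hwv, -⟩ := Tplus_Tminus_bounds hS hco hdp hM
  generalize Tplus S (Tminus S v) = w at *
  simp only [Set.mem_ofPred_eq]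
  choose p hp using hsup
  have hw_low : ∀ x, w x = v x → ∀ h, v x + p x h - (A + B) * ‖h‖ ^ 2 ≤ w (x + h) := by
    intro x hx h
    have h1 := hp x (-h)
    rw [← sub_eq_add_neg, map_neg, norm_neg] at h1
    linarith [hmid x h, hwv (x - h)]
  have hAB : ∀ h : Fin d → ℝ, A * ‖h‖ ^ 2 ≤ (A + B) * ‖h‖ ^ 2 := by
    intro h
    gcongr
    linarith
  have hv2 : ∀ x, w x = v x → ∀ h, |v (x + h) - v x - p x h| ≤ (A + B) * ‖h‖ ^ 2 := by
    intro x hx h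
    refine abs_le.2 ⟨?_, ?_⟩
    · linarith [hw_low x hx h, hwv (x + h)]
    · linarith [hp x h, hAB h]
  have hw2 : ∀ x, w x = v x → ∀ h, |w (x + h) - w x - p x h| ≤ (A + B) * ‖h‖ ^ 2 := by
    intro x hx h
    refine abs_le.2 ⟨?_, ?_⟩
    · linarith [hw_low x hx h]
    · linarith [hp x h, hAB h, hwv (x + h)]
  have hdv : ∀ x, w x = v x → HasFDerivAt v (p x) x :=
    fun x hx => hasFDerivAt_of_two_sided (hv2 x hx)
  have hdw : ∀ x, w x = v x → HasFDerivAt w (p x) x :=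
    fun x hx => hasFDerivAt_of_two_sided (hw2 x hx)
  refine ⟨fun x hx => ⟨(hdv x hx).differentiableAt, (hdw x hx).differentiableAt, ?_⟩,
    6 * (A + B) + 1, by positivity, fun x₁ hx₁ x₂ hx₂ => ?_⟩
  · rw [(hdw x hx).fderiv, (hdv x hx).fderiv]
  · rcases eq_or_ne x₁ x₂ with rfl | hne
    · simp
    rw [(hdv x₁ hx₁).fderiv, (hdv x₂ hx₂).fderiv]
    have h1 := norm_sub_le_of_two_sided (by positivity) hne (hv2 x₁ hx₁) (hv2 x₂ hx₂)
    linarith [norm_nonneg (x₁ - x₂)]
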